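/- arXiv:2604.13212 — 3 statements merged into one kernel-verified Lean document; each statement's English description precedes it below -/
import Mathlib

section
/- For every nonempty finite simple graph G, the fractional DP-chromatic number satisfies χ*_DP(G) ≤ ST^(3)*(G) ≤ ST^(4)*(G). -/
/-!
A complete legal sequence is read as a recipe for colouring a cover whose lists have sizes `S + T`:
each operation on `u` chooses one cover vertex `x` over `u`. As the cover is a matching over every
edge, the lists over `W` together forbid at most `∑ w ∈ W, (S w + T w)` vertices over `u`, so `x`
can be chosen without neighbours over `W`. Discarding `x` and its neighbours then costs only `u`,
whose target pays for it, and the unsaved neighbours of `u`, whose shields pay one each. Hence the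
remaining lists are again at least as large as shield plus target, and an `ST⁽³⁾`-`(s,t)`-degenerate
graph is `(s+t,t)`-DP-colorable. A restricted sequence is in particular a sequence, which gives
the second inequality.

Since `sInf ∅ = 0` in `ℝ`, both inequalities also need the infima on the right to be over nonempty
sets: with shield `|V|` and target `1`, the vertices can be deleted one at a time, saving none.
-/

open scoped Classical

noncomputable section

namespace StrictDeg

/-- The state of the `ShadeSave` process: the active vertex set (the vertex set of the
current induced subgraph), the current shield, and the current target. -/
structure State (V : Type) where
  A : Finset V
  S : V → ℕ
  T : V → ℕ

variable {V : Type}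

/-- The output of the operation `ShadeSave(G[A], S, T, u, W)`. -/
def applyStep (G : SimpleGraph V) (st : State V) (u : V) (W : Finset V) : State V where
  A := if st.T u = 1 then st.A.erase u else st.A
  S := fun v => if G.Adj u v ∧ v ∈ st.A ∧ v ∉ W then st.S v - 1 else st.S v
  T := fun v => if v = u ∧ 1 < st.T u then st.T u - 1 else st.T v

/-- Legality of the operation `ShadeSave(G[A], S, T, u, W)`:  `u` is a vertex of the current
graph, `W` is a set of neighbors of `u` in the current graph,
`S u + T u > ∑_{w ∈ W} (S w + T w)`, and the output shield is nonnegative (in `ℕ` terms: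
every neighbor of `u` in the current graph that is not saved has shield value at least 1). -/
def LegalStep (G : SimpleGraph V) (st : State V) (u : V) (W : Finset V) : Prop :=
  u ∈ st.A ∧
  (∀ w ∈ W, w ∈ st.A ∧ G.Adj u w) ∧
  (∑ w ∈ W, (st.S w + st.T w)) < st.S u + st.T u ∧
  (∀ v ∈ st.A, G.Adj u v → v ∉ W → 1 ≤ st.S v)

/-- `LegalSeq G st l` means `l` is a legal sequence of `ShadeSave` operations starting
from the state `st`. -/
def LegalSeq (G : SimpleGraph V) : State V → List (V × Finset V) → Prop
  | _, [] => True
  | st, op :: rest => LegalStep G st op.1 op.2 ∧ LegalSeq G (applyStep G st op.1 op.2) rest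

/-- The final state after applying the operations in `l` in order. -/
def finalState (G : SimpleGraph V) (st : State V) (l : List (V × Finset V)) : State V :=
  l.foldl (fun s op => applyStep G s op.1 op.2) st

/-- The induced subgraph of `G` on `A`, with shield `S` and target `T`, admits a complete
legal sequence, i.e. it is `ST⁽³⁾`-`(S,T)`-degenerate. -/
def ST3DegOn (G : SimpleGraph V) (A : Finset V) (S T : V → ℕ) : Prop :=
  ∃ l : List (V × Finset V),
    LegalSeq G ⟨A, S, T⟩ l ∧ (finalState G ⟨A, S, T⟩ l).A = ∅

/-- The induced subgraph of `G` on `A`, with shield `S` and target `T`, admits a complete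
restricted (every operation saves on at most one vertex) legal sequence, i.e. it is
`ST⁽⁴⁾`-`(S,T)`-degenerate. -/
def ST4DegOn (G : SimpleGraph V) (A : Finset V) (S T : V → ℕ) : Prop :=
  ∃ l : List (V × Finset V),
    LegalSeq G ⟨A, S, T⟩ l ∧ (∀ op ∈ l, op.2.card ≤ 1) ∧
      (finalState G ⟨A, S, T⟩ l).A = ∅

/-- `G` is `ST⁽³⁾`-`(S,T)`-degenerate. -/
def ST3Deg [Fintype V] (G : SimpleGraph V) (S T : V → ℕ) : Prop :=
  ST3DegOn G Finset.univ S T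

/-- `G` is `ST⁽⁴⁾`-`(S,T)`-degenerate. -/
def ST4Deg [Fintype V] (G : SimpleGraph V) (S T : V → ℕ) : Prop :=
  ST4DegOn G Finset.univ S T

/-- The fractional strict type-3 degeneracy
`ST⁽³⁾*(G) = inf {(s+t)/t : G is ST⁽³⁾-(s,t)-degenerate}`. -/
def ST3Star [Fintype V] (G : SimpleGraph V) : ℝ :=
  sInf { x : ℝ | ∃ s t : ℕ, 1 ≤ t ∧ ST3Deg G (fun _ => s) (fun _ => t) ∧
    x = ((s : ℝ) + t) / t }

/-- The fractional strict type-4 degeneracy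
`ST⁽⁴⁾*(G) = inf {(s+t)/t : G is ST⁽⁴⁾-(s,t)-degenerate}`. -/
def ST4Star [Fintype V] (G : SimpleGraph V) : ℝ :=
  sInf { x : ℝ | ∃ s t : ℕ, 1 ≤ t ∧ ST4Deg G (fun _ => s) (fun _ => t) ∧
    x = ((s : ℝ) + t) / t }

/-- A cover `𝓗 = (L, H)` of the graph `G`. -/
structure Cover (G : SimpleGraph V) where
  /-- The vertex type of the cover graph `H`. -/
  U : Type
  fin : Fintype U
  /-- The cover graph. -/
  H : SimpleGraph U
  /-- The lists: `L v` is the part of the partition of `V(H)` corresponding to `v`. -/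
  L : V → Finset U
  part : ∀ x : U, ∃! v : V, x ∈ L v
  indep : ∀ v : V, ∀ x ∈ L v, ∀ y ∈ L v, ¬ H.Adj x y
  cross : ∀ u v : V, ∀ x ∈ L u, ∀ y ∈ L v, H.Adj x y → G.Adj u v
  matching : ∀ u v : V, G.Adj u v → ∀ x ∈ L u, ∀ y ∈ L v, ∀ y' ∈ L v,
      H.Adj x y → H.Adj x y' → y = y'

/-- `G` is `(𝓗, b)`-colorable: there is an independent set of the cover graph meeting
every list in at least `b` vertices. -/
def Cover.Colorable {G : SimpleGraph V} (C : Cover G) (b : ℕ) : Prop :=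
  ∃ I : Finset C.U, (∀ x ∈ I, ∀ y ∈ I, ¬ C.H.Adj x y) ∧ ∀ v : V, b ≤ (I ∩ C.L v).card

/-- `G` is `(a,b)`-DP-colorable. -/
def DPColorable (G : SimpleGraph V) (a b : ℕ) : Prop :=
  ∀ C : Cover G, (∀ v : V, (C.L v).card = a) → C.Colorable b

/-- The fractional DP-chromatic number
`χ*_DP(G) = inf {a/b : G is (a,b)-DP-colorable}`. -/
def DPStar (G : SimpleGraph V) : ℝ :=
  sInf { x : ℝ | ∃ a b : ℕ, 1 ≤ b ∧ b ≤ a ∧ DPColorable G a b ∧ x = (a : ℝ) / b }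

/-- `G` is `(F₁, F₂)`-DP-colorable. -/
def DPColorableFn (G : SimpleGraph V) (F₁ F₂ : V → ℕ) : Prop :=
  ∀ C : Cover G, (∀ v : V, (C.L v).card = F₁ v) →
    ∃ I : Finset C.U, (∀ x ∈ I, ∀ y ∈ I, ¬ C.H.Adj x y) ∧
      ∀ v : V, (I ∩ C.L v).card = F₂ v

section Operation

variable {G : SimpleGraph V} {st : State V} {u v : V} {W : Finset V}

lemma mem_applyStep_A :
    v ∈ (applyStep G st u W).A ↔ v ∈ st.A ∧ (v = u → st.T u ≠ 1) := by
  simp only [applyStep]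
  split_ifs with h <;> simp [h, and_comm]

lemma applyStep_T_of_ne (hv : v ≠ u) : (applyStep G st u W).T v = st.T v := by
  simp [applyStep, hv]

lemma applyStep_T_self_add_one (hT : 1 < st.T u) : (applyStep G st u W).T u + 1 = st.T u := by
  simp only [applyStep, hT, and_self, if_true]
  omega

lemma applyStep_T_pos (hT : 0 < st.T v) : 0 < (applyStep G st u W).T v := by
  simp only [applyStep]
  split_ifs <;> omega

lemma applyStep_S_le : (applyStep G st u W).S v ≤ st.S v := by
  simp only [applyStep]
  split_ifs <;> omega

lemma applyStep_T_le : (applyStep G st u W).T v ≤ st.T v := by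
  simp only [applyStep]
  split_ifs with h
  · exact h.1 ▸ Nat.sub_le _ _
  · exact le_rfl

lemma LegalStep.applyStep_S_add_T_lt (hstep : LegalStep G st u W) (hT : 0 < st.T u)
    (hv : v ∈ (applyStep G st u W).A) (hpay : v = u ∨ G.Adj u v ∧ v ∉ W) :
    (applyStep G st u W).S v + (applyStep G st u W).T v < st.S v + st.T v := by
  obtain ⟨hvA, hTv⟩ := mem_applyStep_A.1 hv
  rcases hpay with rfl | ⟨hadj, hvW⟩
  · have hT_one : 1 < st.T v := lt_of_le_of_ne hT (hTv rfl).symm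
    have hT_drop : (applyStep G st v W).T v + 1 = st.T v := applyStep_T_self_add_one hT_one
    have hS_le : (applyStep G st v W).S v ≤ st.S v := applyStep_S_le
    omega
  · have hS_pos : 1 ≤ st.S v := hstep.2.2.2 v hvA hadj hvW
    have hS : (applyStep G st u W).S v = st.S v - 1 := by simp [applyStep, hadj, hvA, hvW]
    have hT_eq : (applyStep G st u W).T v = st.T v := applyStep_T_of_ne hadj.ne'
    omega

end Operation

namespace Cover

variable {G : SimpleGraph V} (C : Cover G)

lemma eq_of_mem {x : C.U} {u v : V} (hu : x ∈ C.L u) (hv : x ∈ C.L v) : u = v :=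
  (C.part x).unique hu hv

lemma exists_subset_card_inter_eq_min (K : Finset C.U) (f : V → ℕ) :
    ∃ K' ⊆ K, ∀ v, (K' ∩ C.L v).card = min (f v) (K ∩ C.L v).card := by
  choose J hJ hJcard using fun v =>
    Finset.exists_subset_card_eq (min_le_right (f v) (K ∩ C.L v).card)
  refine ⟨K.filter fun x => ∀ v, x ∈ C.L v → x ∈ J v, Finset.filter_subset _ _, fun v => ?_⟩
  rw [← hJcard v]
  congr 1
  ext x
  simp only [Finset.mem_inter, Finset.mem_filter]
  constructor
  · rintro ⟨⟨-, hx⟩, hxv⟩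
    exact hx v hxv
  · intro hx
    obtain ⟨hxK, hxv⟩ := Finset.mem_inter.1 (hJ v hx)
    exact ⟨⟨hxK, fun w hxw => C.eq_of_mem hxv hxw ▸ hx⟩, hxv⟩

lemma exists_mem_forall_not_adj {K : Finset C.U} {u : V} {W : Finset V}
    (hW : ∀ w ∈ W, G.Adj u w) (hlt : ∑ w ∈ W, (K ∩ C.L w).card < (K ∩ C.L u).card) :
    ∃ x ∈ K ∩ C.L u, ∀ w ∈ W, ∀ y ∈ K ∩ C.L w, ¬ C.H.Adj x y := by
  by_contra! hblocked
  refine hlt.not_ge (le_trans ?_ (Finset.card_biUnion_le (s := W) (t := fun w => K ∩ C.L w)))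
  refine Finset.card_le_card_of_forall_subsingleton C.H.Adj (fun x hx => ?_) ?_
  · obtain ⟨w, hw, y, hy, hxy⟩ := hblocked x hx
    exact ⟨y, Finset.mem_biUnion.2 ⟨w, hw, hy⟩, hxy⟩
  · rintro y hy x ⟨hx, hxy⟩ x' ⟨hx', hxy'⟩
    obtain ⟨w, hw, hyw⟩ := Finset.mem_biUnion.1 hy
    exact C.matching w u (hW w hw).symm y (Finset.mem_inter.1 hyw).2
      x (Finset.mem_inter.1 hx).2 x' (Finset.mem_inter.1 hx').2 hxy.symm hxy'.symm

/-- The members of `K` that may still be chosen after `x`: those outside the closed neighbourhood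
of `x` in the cover graph. -/
def residual (K : Finset C.U) (x : C.U) : Finset C.U :=
  K.filter fun y => y ≠ x ∧ ¬ C.H.Adj x y

variable {C}

lemma mem_residual {K : Finset C.U} {x y : C.U} :
    y ∈ C.residual K x ↔ y ∈ K ∧ y ≠ x ∧ ¬ C.H.Adj x y :=
  Finset.mem_filter

lemma residual_subset (K : Finset C.U) (x : C.U) : C.residual K x ⊆ K :=
  Finset.filter_subset _ _

lemma eq_of_mem_of_eq_or_adj {x y y' : C.U} {v : V} (hy : y ∈ C.L v) (hy' : y' ∈ C.L v)
    (hxy : y = x ∨ C.H.Adj x y) (hxy' : y' = x ∨ C.H.Adj x y') : y = y' := by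
  rcases hxy with rfl | hxy <;> rcases hxy' with rfl | hxy'
  · rfl
  · exact absurd hxy' (C.indep v y hy y' hy')
  · exact absurd hxy (C.indep v y' hy' y hy)
  · obtain ⟨u, hxu, -⟩ := C.part x
    exact C.matching u v (C.cross u v x hxu y hy hxy) x hxu y hy y' hy' hxy hxy'

lemma card_inter_le_card_residual_inter_add_one (K : Finset C.U) (x : C.U) (v : V) :
    (K ∩ C.L v).card ≤ (C.residual K x ∩ C.L v).card + 1 := by
  have hlost : ((K ∩ C.L v) \ (C.residual K x ∩ C.L v)).card ≤ 1 := by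
    have hnear : ∀ y ∈ (K ∩ C.L v) \ (C.residual K x ∩ C.L v),
        y ∈ C.L v ∧ (y = x ∨ C.H.Adj x y) := by
      simp only [Finset.mem_sdiff, Finset.mem_inter, mem_residual]
      tauto
    exact Finset.card_le_one.2 fun y hy y' hy' =>
      eq_of_mem_of_eq_or_adj (hnear y hy).1 (hnear y' hy').1 (hnear y hy).2 (hnear y' hy').2
  calc (K ∩ C.L v).card
      ≤ ((K ∩ C.L v) \ (C.residual K x ∩ C.L v)).card + (C.residual K x ∩ C.L v).card :=
        Finset.card_le_card_sdiff_add_card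
    _ ≤ (C.residual K x ∩ C.L v).card + 1 := by omega

lemma residual_inter_eq {K : Finset C.U} {x : C.U} {u v : V} (hx : x ∈ C.L u) (hvu : v ≠ u)
    (hfree : G.Adj u v → ∀ y ∈ K ∩ C.L v, ¬ C.H.Adj x y) :
    C.residual K x ∩ C.L v = K ∩ C.L v := by
  refine (Finset.inter_subset_inter_right (residual_subset K x)).antisymm fun y hy => ?_
  obtain ⟨hyK, hyv⟩ := Finset.mem_inter.1 hy
  refine Finset.mem_inter.2 ⟨mem_residual.2 ⟨hyK, ?_, fun hxy => ?_⟩, hyv⟩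
  · rintro rfl
    exact hvu (C.eq_of_mem hyv hx)
  · exact hfree (C.cross u v x hx y hyv hxy) y hy hxy

lemma not_adj_insert_of_subset_residual {K I : Finset C.U} {x : C.U} (hIK : I ⊆ C.residual K x)
    (hI : ∀ y ∈ I, ∀ z ∈ I, ¬ C.H.Adj y z) :
    ∀ y ∈ insert x I, ∀ z ∈ insert x I, ¬ C.H.Adj y z := by
  have hxI : ∀ y ∈ I, ¬ C.H.Adj x y := fun y hy => (mem_residual.1 (hIK hy)).2.2
  simp only [Finset.forall_mem_insert]
  exact ⟨⟨C.H.irrefl, hxI⟩, fun y hy => ⟨fun hyx => hxI y hy hyx.symm, hI y hy⟩⟩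

variable (C) in
/-- The invariant of the colouring procedure: the set `K` of cover vertices still available
contains at least shield plus target many vertices over every active vertex. -/
def Supplies (st : State V) (K : Finset C.U) : Prop :=
  ∀ v ∈ st.A, st.S v + st.T v ≤ (K ∩ C.L v).card

variable {st : State V} {u : V} {W : Finset V} {K : Finset C.U}

lemma Supplies.residual (hK : C.Supplies st K) (hT : 0 < st.T u) (hstep : LegalStep G st u W)
    {x : C.U} (hx : x ∈ C.L u) (hfree : ∀ w ∈ W, ∀ y ∈ K ∩ C.L w, ¬ C.H.Adj x y) :
    C.Supplies (applyStep G st u W) (C.residual K x) := by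
  intro v hv
  have hKv := hK v (mem_applyStep_A.1 hv).1
  by_cases hpay : v = u ∨ G.Adj u v ∧ v ∉ W
  · have hdrop := hstep.applyStep_S_add_T_lt hT hv hpay
    have hlost := card_inter_le_card_residual_inter_add_one K x v
    omega
  · obtain ⟨hvu, hsaved⟩ : v ≠ u ∧ (G.Adj u v → v ∈ W) := by tauto
    rw [residual_inter_eq hx hvu fun hadj => hfree v (hsaved hadj)]
    exact (Nat.add_le_add applyStep_S_le applyStep_T_le).trans hKv

lemma Supplies.exists_residual (hK : C.Supplies st K) (hT : 0 < st.T u)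
    (hstep : LegalStep G st u W) :
    ∃ K' ⊆ K, ∃ x ∈ K' ∩ C.L u, C.Supplies (applyStep G st u W) (C.residual K' x) := by
  -- Surplus over `W` could block every vertex over `u`, so the lists are first cut to exact size.
  obtain ⟨K', hK'K, hmin⟩ := C.exists_subset_card_inter_eq_min K fun v => st.S v + st.T v
  have hcard : ∀ v ∈ st.A, (K' ∩ C.L v).card = st.S v + st.T v := fun v hv =>
    (hmin v).trans (min_eq_left (hK v hv))
  obtain ⟨hu, hW, hlt, -⟩ := id hstep
  have hroom : ∑ w ∈ W, (K' ∩ C.L w).card < (K' ∩ C.L u).card := by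
    rwa [hcard u hu, Finset.sum_congr rfl fun w hw => hcard w (hW w hw).1]
  obtain ⟨x, hx, hfree⟩ := C.exists_mem_forall_not_adj (fun w hw => (hW w hw).2) hroom
  have hK' : C.Supplies st K' := fun v hv => (hcard v hv).ge
  exact ⟨K', hK'K, x, hx, hK'.residual hT hstep (Finset.mem_inter.1 hx).2 hfree⟩

lemma target_le_card_insert_inter {I : Finset C.U} {x : C.U} (hx : x ∈ C.L u) (hxI : x ∉ I)
    (hI : ∀ v ∈ (applyStep G st u W).A, (applyStep G st u W).T v ≤ (I ∩ C.L v).card) :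
    ∀ v ∈ st.A, st.T v ≤ (insert x I ∩ C.L v).card := by
  intro v hv
  by_cases hvu : v = u
  · subst hvu
    rw [Finset.insert_inter_of_mem hx,
      Finset.card_insert_of_notMem fun h => hxI (Finset.mem_inter.1 h).1]
    rcases le_or_gt (st.T v) 1 with hT | hT
    · exact hT.trans (Nat.le_add_left 1 _)
    · have hT_drop : (applyStep G st v W).T v + 1 = st.T v := applyStep_T_self_add_one hT
      have hIv := hI v (mem_applyStep_A.2 ⟨hv, fun _ => hT.ne'⟩)
      omega
  · calc st.T v = (applyStep G st u W).T v := (applyStep_T_of_ne hvu).symm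
      _ ≤ (I ∩ C.L v).card := hI v (mem_applyStep_A.2 ⟨hv, fun h => absurd h hvu⟩)
      _ ≤ (insert x I ∩ C.L v).card :=
        Finset.card_le_card (Finset.inter_subset_inter_right (Finset.subset_insert x I))

lemma Supplies.exists_indep {l : List (V × Finset V)} (hK : C.Supplies st K)
    (hT : ∀ v ∈ st.A, 0 < st.T v) (hl : LegalSeq G st l) (hfin : (finalState G st l).A = ∅) :
    ∃ I ⊆ K, (∀ x ∈ I, ∀ y ∈ I, ¬ C.H.Adj x y) ∧ ∀ v ∈ st.A, st.T v ≤ (I ∩ C.L v).card := by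
  induction l generalizing st K with
  | nil =>
    have hA : st.A = ∅ := hfin
    exact ⟨∅, by simp, by simp, by simp [hA]⟩
  | cons op l ih =>
    obtain ⟨u, W⟩ := op
    obtain ⟨hstep, hl⟩ := hl
    obtain ⟨K', hK'K, x, hx, hres⟩ := hK.exists_residual (hT u hstep.1) hstep
    obtain ⟨hxK', hxu⟩ := Finset.mem_inter.1 hx
    obtain ⟨I, hIK', hindep, hcard⟩ := ih hres
      (fun v hv => applyStep_T_pos (hT v (mem_applyStep_A.1 hv).1)) hl hfin
    have hxI : x ∉ I := fun h => (mem_residual.1 (hIK' h)).2.1 rfl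
    have hIK : I ⊆ K := (hIK'.trans (residual_subset K' x)).trans hK'K
    exact ⟨insert x I, Finset.insert_subset (hK'K hxK') hIK,
      not_adj_insert_of_subset_residual hIK' hindep, target_le_card_insert_inter hxu hxI hcard⟩

end Cover

lemma DPColorableFn.dpColorable {G : SimpleGraph V} {a b : ℕ}
    (h : DPColorableFn G (fun _ => a) (fun _ => b)) : DPColorable G a b := by
  intro C hC
  obtain ⟨I, hindep, hcard⟩ := h C hC
  exact ⟨I, hindep, fun v => (hcard v).ge⟩

lemma ST3Deg.dpColorableFn [Fintype V] {G : SimpleGraph V} {S T : V → ℕ} (h : ST3Deg G S T)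
    (hT : ∀ v, 0 < T v) : DPColorableFn G (fun v => S v + T v) T := by
  intro C hC
  obtain ⟨l, hl, hfin⟩ := h
  have hsupply : C.Supplies ⟨Finset.univ, S, T⟩ (Finset.univ.biUnion C.L) := fun v _ => by
    rw [Finset.inter_eq_right.2 (Finset.subset_biUnion_of_mem C.L (Finset.mem_univ v)), hC v]
  obtain ⟨I, -, hindep, hcard⟩ := hsupply.exists_indep (fun v _ => hT v) hl hfin
  obtain ⟨I', hI'I, hmin⟩ := C.exists_subset_card_inter_eq_min I T
  exact ⟨I', fun x hx y hy => hindep x (hI'I hx) y (hI'I hy),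
    fun v => (hmin v).trans (min_eq_left (hcard v (Finset.mem_univ v)))⟩

lemma ST4Deg.st3Deg [Fintype V] {G : SimpleGraph V} {S T : V → ℕ} (h : ST4Deg G S T) :
    ST3Deg G S T := by
  obtain ⟨l, hl, -, hfin⟩ := h
  exact ⟨l, hl, hfin⟩

lemma ST4DegOn.of_legalStep {G : SimpleGraph V} {A : Finset V} {S T : V → ℕ} {u : V}
    {W : Finset V} (hstep : LegalStep G ⟨A, S, T⟩ u W) (hW : W.card ≤ 1)
    (h : ST4DegOn G (applyStep G ⟨A, S, T⟩ u W).A (applyStep G ⟨A, S, T⟩ u W).S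
      (applyStep G ⟨A, S, T⟩ u W).T) :
    ST4DegOn G A S T := by
  obtain ⟨l, hl, hcard, hfin⟩ := h
  exact ⟨(u, W) :: l, ⟨hstep, hl⟩, List.forall_mem_cons.2 ⟨hW, hcard⟩, hfin⟩

lemma st4DegOn_of_card_le (G : SimpleGraph V) {A : Finset V} {S T : V → ℕ}
    (hT : ∀ v ∈ A, T v = 1) (hS : ∀ v ∈ A, A.card ≤ S v) : ST4DegOn G A S T := by
  induction A using Finset.induction_on generalizing S T with
  | empty => exact ⟨[], trivial, by simp, rfl⟩
  | insert u A hu ih =>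
    rw [Finset.card_insert_of_notMem hu] at hS
    have hTu : T u = 1 := hT u (Finset.mem_insert_self u A)
    have hA : (applyStep G ⟨insert u A, S, T⟩ u ∅).A = A := by simp [applyStep, hTu, hu]
    refine ST4DegOn.of_legalStep (u := u) (W := ∅) ?_ (by simp) ?_
    · exact ⟨Finset.mem_insert_self u A, by simp, by simp [hTu], fun v hv _ _ =>
        (Nat.le_add_left 1 A.card).trans (hS v hv)⟩
    · rw [hA]
      refine ih (fun v hv => ?_) fun v hv => ?_
      · rw [applyStep_T_of_ne (ne_of_mem_of_not_mem hv hu)]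
        exact hT v (Finset.mem_insert_of_mem hv)
      · have hSv := hS v (Finset.mem_insert_of_mem hv)
        simp only [applyStep]
        split_ifs <;> omega

lemma st4Deg_card [Fintype V] (G : SimpleGraph V) :
    ST4Deg G (fun _ => Fintype.card V) (fun _ => 1) :=
  st4DegOn_of_card_le G (fun _ _ => rfl) (fun _ _ => le_rfl)

/-- For every nonempty finite simple graph `G`, the fractional DP-chromatic
number satisfies `χ*_DP(G) ≤ ST⁽³⁾*(G) ≤ ST⁽⁴⁾*(G)`. -/
theorem dpStar_le_st3Star_le_st4Star {V : Type} [Fintype V] [Nonempty V]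
    (G : SimpleGraph V) :
    DPStar G ≤ ST3Star G ∧ ST3Star G ≤ ST4Star G := by
  constructor
  · refine csInf_le_csInf ⟨0, ?_⟩ ⟨_, _, 1, le_rfl, (st4Deg_card G).st3Deg, rfl⟩ ?_
    · rintro _ ⟨a, b, -, -, -, rfl⟩
      positivity
    · rintro _ ⟨s, t, ht, hdeg, rfl⟩
      have hcol : DPColorable G (s + t) t := (hdeg.dpColorableFn fun _ => ht).dpColorable
      exact ⟨s + t, t, ht, Nat.le_add_left t s, hcol, by push_cast; rfl⟩
  · refine csInf_le_csInf ⟨0, ?_⟩ ⟨_, _, 1, le_rfl, st4Deg_card G, rfl⟩ ?_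
    · rintro _ ⟨s, t, -, -, rfl⟩
      positivity
    · rintro _ ⟨s, t, ht, hdeg, rfl⟩
      exact ⟨s, t, ht, hdeg.st3Deg, rfl⟩

end StrictDeg
end
end

section
/- For all integers m, n with 2 ≤ m ≤ n, the complete bipartite graph K_{m,n} satisfies ST^(4)*(K_{m,n}) ≤ m + 1 − m/n. -/
/-!
Consider `d` consecutive shadings of a vertex `u` that save each vertex of a set `W` once. Both
`S u + T u` and `S w + T w`, for a neighbour `w` not saved yet, drop by one at each shading, so all
these savings are legal as soon as `S w + T w < S u + T u` holds for each `w ∈ W` before the first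
of them. In a sweep over an independent set the shields met only get smaller, so again the
inequalities at the beginning suffice.

In `K_{m,n}` let every sweep shade each vertex of the part of size `m` exactly `n` times. Give every
vertex the target `n(k+1)` and the shield `m(n-1)k + mn`. The first sweep saves nothing, and each of
the `k` remaining ones saves every vertex of the other part once per shaded vertex. A saving sweep
lowers the targets on one side by `n` and the shields on the other side by `m(n-1) ≥ n`, so the lead
in `S + T` gained by the first sweep is never lost. Afterwards the first part is exhausted, the
shields on the second are `0`, and no edges remain. The ratio obtained is
`m + 1 - m/n + m/(n(k+1))`.
-/

open scoped Classical

noncomputable section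

namespace StrictDeg

variable {V : Type}

lemma ST4DegOn.of_step {G : SimpleGraph V} {st : State V} {u : V} {W : Finset V}
    (h : ST4DegOn G (applyStep G st u W).A (applyStep G st u W).S (applyStep G st u W).T)
    (hlegal : LegalStep G st u W) (hcard : W.card ≤ 1) : ST4DegOn G st.A st.S st.T := by
  obtain ⟨l, hl, hl1, hempty⟩ := h
  exact ⟨(u, W) :: l, ⟨hlegal, hl⟩, List.forall_mem_cons.2 ⟨hcard, hl1⟩, hempty⟩

/-- The total by which the shield of `v` drops during `d` shadings of `u` that save each vertex
of `W` exactly once. The truncation in `d - 1` is harmless, as such a run needs `W.card ≤ d`. -/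
def shieldLoss (G : SimpleGraph V) (u : V) (W : Finset V) (d : ℕ) (v : V) : ℕ :=
  if G.Adj u v then if v ∈ W then d - 1 else d else 0

lemma shieldLoss_self (G : SimpleGraph V) (u : V) (W : Finset V) (d : ℕ) :
    shieldLoss G u W d u = 0 := by
  simp [shieldLoss]

lemma shieldLoss_union (G : SimpleGraph V) (u : V) {W₁ W₂ : Finset V} (hW : Disjoint W₁ W₂)
    {d₁ d₂ : ℕ} (h₁ : W₁.card ≤ d₁) (h₂ : W₂.card ≤ d₂) (v : V) :
    shieldLoss G u (W₁ ∪ W₂) (d₁ + d₂) v = shieldLoss G u W₁ d₁ v + shieldLoss G u W₂ d₂ v := by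
  have hpos₁ : v ∈ W₁ → 0 < d₁ := fun hv => (Finset.card_pos.2 ⟨v, hv⟩).trans_le h₁
  have hpos₂ : v ∈ W₂ → 0 < d₂ := fun hv => (Finset.card_pos.2 ⟨v, hv⟩).trans_le h₂
  have hdisj : v ∈ W₁ → v ∉ W₂ := fun hv => Finset.disjoint_left.1 hW hv
  simp only [shieldLoss, Finset.mem_union]
  grind

section Emptiable

variable [Fintype V] {G : SimpleGraph V} {S S' R : V → ℕ}

/-- `Emptiable G S R` says that `G` can be emptied by a restricted legal sequence from every state
in which `R v` shadings of each vertex `v` remain, the vertices with `R v = 0` having been deleted,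
and the vertices that are left have shield `S`. The process keeps a shield and a target for deleted
vertices but never reads them, so they are left arbitrary. -/
def Emptiable (G : SimpleGraph V) (S R : V → ℕ) : Prop :=
  ∀ S₀ T₀ : V → ℕ, (∀ v, 0 < R v → S₀ v = S v ∧ T₀ v = R v) →
    ST4DegOn G {v | 0 < R v} S₀ T₀

lemma Emptiable.congr (h : Emptiable G S' R) (hS : ∀ v, 0 < R v → S v = S' v) :
    Emptiable G S R :=
  fun S₀ T₀ h₀ => h S₀ T₀ fun v hv => ⟨(h₀ v hv).1.trans (hS v hv), (h₀ v hv).2⟩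

lemma Emptiable.st4Deg (h : Emptiable G S R) (hR : ∀ v, 0 < R v) : ST4Deg G S R := by
  have hall : ({v | 0 < R v} : Finset V) = Finset.univ := by simp [hR]
  rw [ST4Deg, ← hall]
  exact h S R fun _ _ => ⟨rfl, rfl⟩

lemma emptiable_zero : Emptiable G S 0 :=
  fun _ _ _ => ⟨[], trivial, by simp, by simp [finalState]⟩

lemma applyStep_A {S₀ T₀ : V → ℕ} (hT₀ : ∀ v, 0 < R v → T₀ v = R v) {u : V} (hu : 0 < R u)
    (W : Finset V) :
    (applyStep G ⟨({v | 0 < R v} : Finset V), S₀, T₀⟩ u W).A =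
      ({v | 0 < Function.update R u (R u - 1) v} : Finset V) := by
  ext v
  rcases eq_or_ne v u with rfl | hv
  · simp only [applyStep, hT₀ v hu]
    grind
  · simp only [applyStep]
    grind

lemma Emptiable.of_step {u : V} {W : Finset V} (h : Emptiable G S' (Function.update R u (R u - 1)))
    (hu : 0 < R u) (hcard : W.card ≤ 1)
    (hW : ∀ w ∈ W, G.Adj u w ∧ 0 < R w ∧ S w + R w < S u + R u)
    (hS : ∀ v, 0 < R v → S v = S' v + shieldLoss G u W 1 v) : Emptiable G S R := by
  intro S₀ T₀ h₀
  refine ST4DegOn.of_step (st := ⟨{v | 0 < R v}, S₀, T₀⟩) (u := u) (W := W) ?_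
    ⟨by simpa using hu, fun w hw => ?_, ?_, fun v hv hadj hvW => ?_⟩ hcard
  · rw [applyStep_A (fun v hv => (h₀ v hv).2) hu]
    refine h _ _ fun v hv => ?_
    have hRv : 0 < R v := by grind
    have hSv := hS v hRv
    obtain ⟨hS₀v, hT₀v⟩ := h₀ v hRv
    simp only [applyStep, shieldLoss, Function.update_apply] at hSv ⊢
    grind
  · simpa using ⟨(hW w hw).2.1, (hW w hw).1⟩
  · obtain ⟨hSu, hTu⟩ := h₀ u hu
    rcases Nat.le_one_iff_eq_zero_or_eq_one.1 hcard with hW0 | hW1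
    · simp only [Finset.card_eq_zero.1 hW0, Finset.sum_empty]
      omega
    · obtain ⟨w, rfl⟩ := Finset.card_eq_one.1 hW1
      obtain ⟨-, hRw, hlt⟩ := hW w (Finset.mem_singleton_self w)
      obtain ⟨hSw, hTw⟩ := h₀ w hRw
      simpa [hSu, hTu, hSw, hTw] using hlt
  · have hRv : 0 < R v := by simpa using hv
    have hSv := hS v hRv
    simp only [shieldLoss, if_pos hadj, if_neg hvW] at hSv
    have hS₀v := (h₀ v hRv).1
    change 1 ≤ S₀ v
    omega

lemma Emptiable.of_run {u : V} {W : Finset V} {d : ℕ}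
    (h : Emptiable G S' (Function.update R u (R u - d))) (hd : d ≤ R u) (hcard : W.card ≤ d)
    (hW : ∀ w ∈ W, G.Adj u w ∧ 0 < R w ∧ S w + R w < S u + R u)
    (hS : ∀ v, 0 < R v → S v = S' v + shieldLoss G u W d v) : Emptiable G S R := by
  induction d generalizing S R W with
  | zero =>
    rw [Nat.sub_zero, Function.update_eq_self] at h
    exact h.congr fun v hv => by simpa [shieldLoss] using hS v hv
  | succ d ih =>
    obtain ⟨W₁, hW₁, hcard₁, hcard₂⟩ : ∃ W₁ ⊆ W, W₁.card ≤ 1 ∧ (W \ W₁).card ≤ d := by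
      obtain ⟨W₁, hW₁, hcard₁⟩ := Finset.exists_subset_card_eq (min_le_right 1 W.card)
      refine ⟨W₁, hW₁, by omega, ?_⟩
      rw [Finset.card_sdiff_of_subset hW₁]
      omega
    set S₁ : V → ℕ := fun v => S' v + shieldLoss G u (W \ W₁) d v
    have hS₁ : ∀ v, 0 < R v → S v = S₁ v + shieldLoss G u W₁ 1 v := fun v hv => by
      rw [hS v hv, ← Finset.union_sdiff_of_subset hW₁, add_comm d,
        shieldLoss_union G u Finset.disjoint_sdiff hcard₁ hcard₂]
      grind
    have hu : 0 < R u := by omega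
    refine Emptiable.of_step (ih (S := S₁) (W := W \ W₁) ?_ ?_ hcard₂ ?_ fun _ _ => rfl) hu hcard₁
      (fun w hw => hW w (hW₁ hw)) hS₁
    · simpa [Nat.sub_sub, add_comm 1 d] using h
    · rw [Function.update_self]
      omega
    · intro w hw
      obtain ⟨hwW, hwW₁⟩ := Finset.mem_sdiff.1 hw
      obtain ⟨hadj, hRw, hlt⟩ := hW w hwW
      have hSw := hS₁ w hRw
      have hSu := hS₁ u hu
      rw [shieldLoss_self] at hSu
      rw [shieldLoss, if_pos hadj, if_neg hwW₁] at hSw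
      rw [Function.update_of_ne hadj.ne', Function.update_self]
      exact ⟨hadj, hRw, by omega⟩

lemma Emptiable.of_sweep {I : Finset V} {W : V → Finset V} {d : V → ℕ}
    (h : Emptiable G S' (I.piecewise (R - d) R)) (hI : G.IsIndepSet I)
    (hd : ∀ u ∈ I, d u ≤ R u) (hcard : ∀ u ∈ I, (W u).card ≤ d u)
    (hW : ∀ u ∈ I, ∀ w ∈ W u, G.Adj u w ∧ 0 < R w ∧ S w + R w < S u + R u)
    (hS : ∀ v, 0 < R v → S v = S' v + ∑ u ∈ I, shieldLoss G u (W u) (d u) v) :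
    Emptiable G S R := by
  induction I using Finset.induction generalizing S R with
  | empty => exact (by simpa using h : Emptiable G S' R).congr fun v hv => by simpa using hS v hv
  | insert u I hu ih =>
    simp only [Finset.forall_mem_insert] at hd hcard hW
    have hnadj : ∀ u' ∈ I, ¬ G.Adj u u' := fun u' hu' hadj =>
      hI (Finset.mem_insert_self u I) (Finset.mem_insert_of_mem hu') hadj.ne hadj
    set S₁ : V → ℕ := fun v => S' v + ∑ u' ∈ I, shieldLoss G u' (W u') (d u') v
    have hS₁ : ∀ v, 0 < R v → S v = S₁ v + shieldLoss G u (W u) (d u) v := fun v hv => by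
      rw [hS v hv, Finset.sum_insert hu]
      grind
    have hRI : ∀ u' ∈ I, Function.update R u (R u - d u) u' = R u' := fun u' hu' =>
      Function.update_of_ne (ne_of_mem_of_not_mem hu' hu) _ _
    refine Emptiable.of_run (ih (S := S₁) ?_ (hI.mono (Finset.subset_insert u I)) ?_ hcard.2 ?_
      fun _ _ => rfl) hd.1 hcard.1 hW.1 hS₁
    · convert h using 1
      funext v
      simp only [Finset.piecewise, Finset.mem_insert, Function.update_apply, Pi.sub_apply]
      grind
    · exact fun u' hu' => (hd.2 u' hu').trans_eq (hRI u' hu').symm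
    · intro u' hu' w hw
      obtain ⟨hadj, hRw, hlt⟩ := hW.2 u' hu' w hw
      have hRu' : 0 < R u' :=
        (Finset.card_pos.2 ⟨w, hw⟩).trans_le ((hcard.2 u' hu').trans (hd.2 u' hu'))
      have hSw := hS₁ w hRw
      have hSu' := hS₁ u' hRu'
      rw [shieldLoss, if_neg (hnadj u' hu')] at hSu'
      have hwu : w ≠ u := by
        rintro rfl
        exact hnadj u' hu' hadj.symm
      rw [hRI u' hu', Function.update_of_ne hwu]
      exact ⟨hadj, hRw, by omega⟩

lemma emptiable_of_isIndepSet (hR : G.IsIndepSet {v | 0 < R v}) : Emptiable G S R := by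
  have hzero : (Finset.univ.filter (0 < R ·)).piecewise (R - R) R = 0 := by
    funext v
    rcases (R v).eq_zero_or_pos with hv | hv <;> simp [Finset.piecewise, hv]
  refine Emptiable.of_sweep (S' := S) (I := {v | 0 < R v}) (W := fun _ => ∅) (d := R)
    (hzero ▸ emptiable_zero) (by simpa using hR) (fun _ _ => le_rfl) (by simp) (by simp)
    fun v hv => ?_
  simp only [left_eq_add, Finset.sum_eq_zero_iff, Finset.mem_filter_univ]
  intro u hu
  have hadj : ¬ G.Adj u v := fun hadj => hR hu hv hadj.ne hadj
  simp [shieldLoss, hadj]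

end Emptiable

section CompleteBipartite

variable {α β : Type} [Fintype α] [Fintype β]

lemma Emptiable.of_left_sweep {s a : α → ℕ} {σ t : β → ℕ} {W : Finset β} {d : ℕ}
    (h : Emptiable (completeBipartiteGraph α β) (Sum.elim s σ) (Sum.elim a t))
    (hcard : W.card ≤ d) (ht : ∀ j ∈ W, 0 < t j)
    (hW : ∀ i, ∀ j ∈ W, σ j + Fintype.card α * (d - 1) + t j < s i + (a i + d)) :
    Emptiable (completeBipartiteGraph α β)
      (Sum.elim s fun j => σ j + Fintype.card α * if j ∈ W then d - 1 else d)
      (Sum.elim (fun i => a i + d) t) := by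
  refine Emptiable.of_sweep (S' := Sum.elim s σ) (I := Finset.univ.map .inl)
    (W := fun _ => W.map .inr) (d := fun _ => d) ?_ ?_ ?_ ?_ ?_ ?_
  · convert h using 1
    funext v
    cases v <;> simp [Finset.piecewise]
  · simp [Set.Pairwise]
  · simp
  · simpa using fun _ => hcard
  · simpa +contextual [Finset.forall_mem_map] using fun i j hj => ⟨ht j hj, hW i j hj⟩
  · rintro (i | j) - <;> simp [shieldLoss]

lemma emptiable_completeBipartiteGraph_of_lt {s t : ℕ} (ht : 0 < t) (k : ℕ)
    (hαβ : Fintype.card β ≤ Fintype.card α * (Fintype.card β - 1))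
    (hst : Fintype.card α * (Fintype.card β - 1) * k + t < s + Fintype.card β * k) :
    Emptiable (completeBipartiteGraph α β)
      (Sum.elim (fun _ => s) fun _ => Fintype.card α * (Fintype.card β - 1) * k)
      (Sum.elim (fun _ => Fintype.card β * k) fun _ => t) := by
  induction k with
  | zero =>
    refine emptiable_of_isIndepSet ?_
    rintro (u | u) hu (v | v) hv - <;> simp_all
  | succ k ih =>
    rw [Nat.mul_succ, Nat.mul_succ] at hst
    have hsweep := Emptiable.of_left_sweep (W := Finset.univ) (d := Fintype.card β)
      (ih (by omega)) le_rfl (fun _ _ => ht) (fun _ _ _ => by omega)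
    simpa [Nat.mul_succ] using hsweep

lemma st4Deg_completeBipartiteGraph (hα : 2 ≤ Fintype.card α) (hβ : 2 ≤ Fintype.card β) (k : ℕ) :
    ST4Deg (completeBipartiteGraph α β)
      (fun _ => Fintype.card α * (Fintype.card β - 1) * k + Fintype.card α * Fintype.card β)
      (fun _ => Fintype.card β * k + Fintype.card β) := by
  have hαβ : Fintype.card β ≤ Fintype.card α * (Fintype.card β - 1) :=
    calc Fintype.card β ≤ 2 * (Fintype.card β - 1) := by omega
      _ ≤ Fintype.card α * (Fintype.card β - 1) := Nat.mul_le_mul_right _ hα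
  have hlead : 2 * Fintype.card β ≤ Fintype.card α * Fintype.card β := Nat.mul_le_mul_right _ hα
  have hsaved := emptiable_completeBipartiteGraph_of_lt (α := α) (β := β)
    (s := Fintype.card α * (Fintype.card β - 1) * k + Fintype.card α * Fintype.card β)
    (t := Fintype.card β * k + Fintype.card β) (by omega) k hαβ (by omega)
  have hunsaved := Emptiable.of_left_sweep (W := ∅) (d := Fintype.card β) hsaved
    (by simp) (by simp) (by simp)
  refine Emptiable.st4Deg ?_ fun _ => by omega
  convert hunsaved using 1 <;> funext v <;> cases v <;> simp

end CompleteBipartite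

lemma st4Star_le_of_st4Deg [Fintype V] {G : SimpleGraph V} {s t : ℕ} (ht : 1 ≤ t)
    (h : ST4Deg G (fun _ => s) (fun _ => t)) : ST4Star G ≤ ((s : ℝ) + t) / t := by
  refine csInf_le ⟨0, ?_⟩ ⟨s, t, ht, h, rfl⟩
  rintro x ⟨s, t, -, -, rfl⟩
  positivity

theorem st4Star_completeBipartite_le_general {α β : Type} [Fintype α] [Fintype β]
    (hα : 2 ≤ Fintype.card α) (hβ : 2 ≤ Fintype.card β) :
    ST4Star (completeBipartiteGraph α β) ≤
      (Fintype.card α : ℝ) + 1 - (Fintype.card α : ℝ) / (Fintype.card β : ℝ) := by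
  have hn : (Fintype.card β : ℝ) ≠ 0 := by positivity
  have hbound : ∀ k : ℕ, ST4Star (completeBipartiteGraph α β) ≤
      (Fintype.card α : ℝ) + 1 - (Fintype.card α : ℝ) / (Fintype.card β : ℝ) +
        (Fintype.card α : ℝ) / (Fintype.card β : ℝ) * (1 / ((k : ℝ) + 1)) := fun k => by
    refine (st4Star_le_of_st4Deg (by omega) (st4Deg_completeBipartiteGraph hα hβ k)).trans_eq ?_
    have hk : (k : ℝ) + 1 ≠ 0 := by positivity
    push_cast [Nat.cast_sub (one_le_two.trans hβ)]
    rw [← mul_add_one (Fintype.card β : ℝ)]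
    field_simp
    ring
  refine ge_of_tendsto' (x := Filter.atTop) ?_ hbound
  simpa using (tendsto_one_div_add_atTop_nhds_zero_nat (𝕜 := ℝ)).const_mul
    ((Fintype.card α : ℝ) / Fintype.card β) |>.const_add
      ((Fintype.card α : ℝ) + 1 - (Fintype.card α : ℝ) / Fintype.card β)

/-- For all integers `m, n` with `2 ≤ m ≤ n`, the complete bipartite graph
`K_{m,n}` satisfies `ST⁽⁴⁾*(K_{m,n}) ≤ m + 1 − m/n`. -/
theorem st4Star_completeBipartite_le (m n : ℕ) (hm : 2 ≤ m) (hmn : m ≤ n) :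
    ST4Star (completeBipartiteGraph (Fin m) (Fin n)) ≤ (m : ℝ) + 1 - (m : ℝ) / (n : ℝ) := by
  simpa using st4Star_completeBipartite_le_general (α := Fin m) (β := Fin n)
    (by simpa using hm) (by simpa using hm.trans hmn)

end StrictDeg
end
end

section
/- Suppose j ∈ {3,4}, G is a (possibly empty) graph, and S and T are a shield and a target of G. If G is ST^(j)-(S,T)-degenerate, then G is ST^(j)-(kS,kT)-degenerate for every k ∈ ℕ, where kS and kT denote the pointwise scalar multiples of S and T. -/
/-!
Perform every operation `(u, W)` of the given sequence `k` times in a row. A strict inequality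
`σ > τ` between the weights of `u` and `W` becomes `kσ ≥ kτ + k` after scaling, and an unsaved
neighbour with shield at least `1` gets shield at least `k`. Each copy of the operation uses up one
unit of this slack, so all `k` copies are legal, and together they subtract `k` times what the
original operation subtracts. The sets `W` do not change, so restricted sequences stay restricted.
-/

open scoped Classical

noncomputable section

namespace StrictDeg

variable {V : Type}

/-- The output of `n` successive copies of the operation `ShadeSave(G[A], S, T, u, W)`, when
`n ≤ T u`. A deleted vertex keeps the target `1`, whence the `max`. -/
def multiStep (G : SimpleGraph V) (st : State V) (u : V) (W : Finset V) (n : ℕ) : State V where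
  A := if st.T u = n then st.A.erase u else st.A
  S := fun v => if G.Adj u v ∧ v ∈ st.A ∧ v ∉ W then st.S v - n else st.S v
  T := fun v => if v = u then max (st.T u - n) 1 else st.T v

/-- The operation `ShadeSave(G[A], S, T, u, W)` is legal with enough slack to be repeated `n` times
before `u` runs out of target. -/
structure LegalMultiStep (G : SimpleGraph V) (st : State V) (u : V) (W : Finset V) (n : ℕ) :
    Prop where
  mem : u ∈ st.A
  saved : ∀ w ∈ W, w ∈ st.A ∧ G.Adj u w
  le_target : n ≤ st.T u
  sum_add_le : ∑ w ∈ W, (st.S w + st.T w) + n ≤ st.S u + st.T u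
  le_shield : ∀ v ∈ st.A, G.Adj u v → v ∉ W → n ≤ st.S v

/-- On its active vertices `st'` is `k` times `st`, whose targets are positive there. Inactive
vertices are unconstrained, because a deleted vertex keeps the target `1` in both processes. -/
structure IsScaling (k : ℕ) (st st' : State V) : Prop where
  active : st'.A = st.A
  shield : ∀ v ∈ st.A, st'.S v = k * st.S v
  target : ∀ v ∈ st.A, st'.T v = k * st.T v
  target_pos : ∀ v ∈ st.A, 1 ≤ st.T v

section Sequences

variable {G : SimpleGraph V}

theorem finalState_append (l₁ l₂ : List (V × Finset V)) (st : State V) :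
    finalState G st (l₁ ++ l₂) = finalState G (finalState G st l₁) l₂ :=
  List.foldl_append

theorem legalSeq_append (l₁ l₂ : List (V × Finset V)) (st : State V) :
    LegalSeq G st (l₁ ++ l₂) ↔ LegalSeq G st l₁ ∧ LegalSeq G (finalState G st l₁) l₂ := by
  induction l₁ generalizing st with
  | nil => simp [LegalSeq, finalState]
  | cons op l ih => simp [LegalSeq, finalState, ih, and_assoc]

end Sequences

section MultiStep

variable {G : SimpleGraph V} {st : State V} {u : V} {W : Finset V} {n : ℕ}

theorem multiStep_zero (hT : 0 < st.T u) : multiStep G st u W 0 = st := by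
  have hT_max : (fun v => if v = u then max (st.T u) 1 else st.T v) = st.T := by
    funext v
    split_ifs with hv
    · rw [hv, max_eq_left hT]
    · rfl
  simp [multiStep, hT.ne', hT_max]

theorem applyStep_multiStep (hn : n < st.T u) :
    applyStep G (multiStep G st u W n) u W = multiStep G st u W (n + 1) := by
  have hTu : max (st.T u - n) 1 = st.T u - n := max_eq_left (Nat.sub_pos_of_lt hn)
  have h_last : st.T u - n = 1 ↔ st.T u = n + 1 := by omega
  simp only [applyStep, multiStep, if_neg hn.ne', if_true, hTu, h_last, State.mk.injEq, true_and]
  constructor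
  · funext v
    split_ifs <;> omega
  · funext v
    rcases eq_or_ne v u with rfl | hvu
    · simp only [if_true, true_and]
      split_ifs <;> omega
    · simp only [hvu, if_false, false_and]

theorem multiStep_one (hT : 0 < st.T u) : multiStep G st u W 1 = applyStep G st u W := by
  rw [← applyStep_multiStep hT, multiStep_zero hT]

theorem finalState_replicate (hT : 0 < st.T u) (hn : n ≤ st.T u) :
    finalState G st (List.replicate n (u, W)) = multiStep G st u W n := by
  induction n with
  | zero => exact (multiStep_zero hT).symm
  | succ n ih =>
    rw [List.replicate_succ', finalState_append, ih (by omega)]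
    exact applyStep_multiStep hn

theorem LegalStep.legalMultiStep_one (h : LegalStep G st u W) (hT : 1 ≤ st.T u) :
    LegalMultiStep G st u W 1 :=
  let ⟨hu, hW, hsum, hS⟩ := h
  ⟨hu, hW, hT, hsum, hS⟩

theorem LegalMultiStep.mono {m : ℕ} (h : LegalMultiStep G st u W n) (hmn : m ≤ n) :
    LegalMultiStep G st u W m where
  mem := h.mem
  saved := h.saved
  le_target := hmn.trans h.le_target
  sum_add_le := (Nat.add_le_add_left hmn _).trans h.sum_add_le
  le_shield v hv hadj hvW := hmn.trans (h.le_shield v hv hadj hvW)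

theorem LegalMultiStep.legalStep_multiStep (h : LegalMultiStep G st u W (n + 1)) :
    LegalStep G (multiStep G st u W n) u W := by
  have hn : n < st.T u := h.le_target
  have hA : (multiStep G st u W n).A = st.A := if_neg hn.ne'
  have hW_weight : ∑ w ∈ W, ((multiStep G st u W n).S w + (multiStep G st u W n).T w) =
      ∑ w ∈ W, (st.S w + st.T w) :=
    Finset.sum_congr rfl fun w hw => by simp [multiStep, hw, (h.saved w hw).2.ne']
  have hu_weight : (multiStep G st u W n).S u + (multiStep G st u W n).T u =
      st.S u + (st.T u - n) := by
    simp [multiStep, Nat.one_le_iff_ne_zero, Nat.sub_ne_zero_of_lt hn]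
  refine ⟨hA ▸ h.mem, hA ▸ h.saved, ?_, fun v hv hadj hvW => ?_⟩
  · have := h.sum_add_le
    omega
  · rw [hA] at hv
    have := h.le_shield v hv hadj hvW
    simp only [multiStep, hadj, hv, hvW, not_false_eq_true, and_self, if_true]
    omega

theorem LegalMultiStep.legalSeq_replicate (h : LegalMultiStep G st u W n) :
    LegalSeq G st (List.replicate n (u, W)) := by
  induction n with
  | zero => trivial
  | succ n ih =>
    have hn : n < st.T u := h.le_target
    rw [List.replicate_succ', legalSeq_append, finalState_replicate (by omega) hn.le]
    exact ⟨ih (h.mono n.le_succ), h.legalStep_multiStep, trivial⟩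

end MultiStep

namespace IsScaling

variable {G : SimpleGraph V} {k : ℕ} {st st' : State V} {u : V} {W : Finset V}

theorem legalMultiStep_mul {n : ℕ} (hs : IsScaling k st st') (h : LegalMultiStep G st u W n) :
    LegalMultiStep G st' u W (k * n) where
  mem := hs.active ▸ h.mem
  saved := hs.active ▸ h.saved
  le_target := hs.target u h.mem ▸ Nat.mul_le_mul_left k h.le_target
  sum_add_le := by
    have hW_weight : ∑ w ∈ W, (st'.S w + st'.T w) = k * ∑ w ∈ W, (st.S w + st.T w) := by
      rw [Finset.mul_sum]
      refine Finset.sum_congr rfl fun w hw => ?_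
      rw [hs.shield w (h.saved w hw).1, hs.target w (h.saved w hw).1, mul_add]
    rw [hW_weight, hs.shield u h.mem, hs.target u h.mem, ← mul_add, ← mul_add]
    exact Nat.mul_le_mul_left k h.sum_add_le
  le_shield v hv hadj hvW := by
    rw [hs.active] at hv
    rw [hs.shield v hv]
    exact Nat.mul_le_mul_left k (h.le_shield v hv hadj hvW)

theorem multiStep_mul {n : ℕ} (hs : IsScaling k st st') (hk : 1 ≤ k) (hu : u ∈ st.A)
    (hn : n ≤ st.T u) :
    IsScaling k (multiStep G st u W n) (multiStep G st' u W (k * n)) := by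
  have h_deleted : st'.T u = k * n ↔ st.T u = n := by
    rw [hs.target u hu]
    exact Nat.mul_right_inj (by omega)
  have h_active {v : V} (hv : v ∈ (multiStep G st u W n).A) :
      v ∈ st.A ∧ (v = u → n < st.T u) := by
    simp only [multiStep] at hv
    split_ifs at hv with hTu
    · exact ⟨Finset.mem_of_mem_erase hv, fun h => absurd h (Finset.ne_of_mem_erase hv)⟩
    · exact ⟨hv, fun _ => lt_of_le_of_ne hn (Ne.symm hTu)⟩
  refine ⟨?_, fun v hv => ?_, fun v hv => ?_, fun v hv => ?_⟩ <;>
    simp only [multiStep, hs.active, h_deleted]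
  · rw [hs.shield v (h_active hv).1]
    split_ifs
    · rw [Nat.mul_sub]
    · rfl
  · split_ifs with hvu
    · have hpos : 1 ≤ st.T u - n := Nat.sub_pos_of_lt ((h_active hv).2 hvu)
      rw [hs.target u hu, ← Nat.mul_sub, max_eq_left hpos,
        max_eq_left (Nat.mul_pos hk hpos)]
    · exact hs.target v (h_active hv).1
  · split_ifs
    · exact le_max_right _ _
    · exact hs.target_pos v (h_active hv).1

theorem applyStep_replicate (hs : IsScaling k st st') (hk : 1 ≤ k) (h : LegalStep G st u W) :
    LegalSeq G st' (List.replicate k (u, W)) ∧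
      IsScaling k (applyStep G st u W) (finalState G st' (List.replicate k (u, W))) := by
  have hT : 1 ≤ st.T u := hs.target_pos u h.1
  have hlegal : LegalMultiStep G st' u W k := by
    simpa using hs.legalMultiStep_mul (h.legalMultiStep_one hT)
  refine ⟨hlegal.legalSeq_replicate, ?_⟩
  rw [finalState_replicate (hk.trans hlegal.le_target) hlegal.le_target, ← multiStep_one hT]
  simpa using hs.multiStep_mul (G := G) (W := W) hk h.1 hT

theorem finalState_flatMap_replicate (hs : IsScaling k st st') (hk : 1 ≤ k)
    {l : List (V × Finset V)} (hl : LegalSeq G st l) :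
    LegalSeq G st' (l.flatMap (List.replicate k)) ∧
      IsScaling k (finalState G st l) (finalState G st' (l.flatMap (List.replicate k))) := by
  induction l generalizing st st' with
  | nil => exact ⟨trivial, hs⟩
  | cons op l ih =>
    obtain ⟨hblock, hs_block⟩ := hs.applyStep_replicate hk hl.1
    obtain ⟨hrest, hs_rest⟩ := ih hs_block hl.2
    rw [List.flatMap_cons, legalSeq_append, finalState_append]
    exact ⟨⟨hblock, hrest⟩, hs_rest⟩

end IsScaling

theorem stDeg_smul_general (G : SimpleGraph V) (A : Finset V) (S T : V → ℕ)
    (hT : ∀ v ∈ A, 1 ≤ T v) (k : ℕ) (hk : 1 ≤ k) :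
    (ST3DegOn G A S T → ST3DegOn G A (fun v => k * S v) (fun v => k * T v)) ∧
    (ST4DegOn G A S T → ST4DegOn G A (fun v => k * S v) (fun v => k * T v)) := by
  have hs : IsScaling k ⟨A, S, T⟩ ⟨A, fun v => k * S v, fun v => k * T v⟩ :=
    ⟨rfl, fun _ _ => rfl, fun _ _ => rfl, hT⟩
  constructor
  · rintro ⟨l, hl, hempty⟩
    obtain ⟨hl', hs'⟩ := hs.finalState_flatMap_replicate hk hl
    exact ⟨_, hl', hs'.active.trans hempty⟩
  · rintro ⟨l, hl, hcard, hempty⟩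
    obtain ⟨hl', hs'⟩ := hs.finalState_flatMap_replicate hk hl
    refine ⟨_, hl', fun op hop => ?_, hs'.active.trans hempty⟩
    obtain ⟨op', hop', hmem⟩ := List.mem_flatMap.1 hop
    exact List.eq_of_mem_replicate hmem ▸ hcard op' hop'

/-- Suppose `j ∈ {3,4}`, `G` is a (possibly empty) graph, and `S` and `T` are
a shield and a target of `G`.  If `G` is `ST⁽ʲ⁾`-`(S,T)`-degenerate, then `G` is
`ST⁽ʲ⁾`-`(kS,kT)`-degenerate for every `k ∈ ℕ` (so `k ≥ 1`). -/
theorem stDeg_smul {V : Type} [Fintype V] (G : SimpleGraph V)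
    (S T : V → ℕ) (hT : ∀ v, 1 ≤ T v) (k : ℕ) (hk : 1 ≤ k) :
    (ST3Deg G S T → ST3Deg G (fun v => k * S v) (fun v => k * T v)) ∧
    (ST4Deg G S T → ST4Deg G (fun v => k * S v) (fun v => k * T v)) := by
  exact stDeg_smul_general G Finset.univ S T (fun v _ => hT v) k hk

end StrictDeg
end
end
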